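/- Let F_q be a finite field of odd characteristic p, and let k be an integer with 3 < k+2 < q−3 and p ∣ k+2. Then for every ζ ∈ F_q^* there exist k+2 distinct elements y_1, …, y_{k+2} of F_q such that y_1 + ⋯ + y_{k+2} = 0 and y_1² + ⋯ + y_{k+2}² = ζ. -/

import Mathlib

/-!
Write `q = |F|` and `m = k + 2`. Since `p ∣ m`, both numbers are multiples of `p`, and `p < q`.

Let `L` be an additive subgroup of `F` of order `p` and let `σ` be the sum of the squares of its
elements. The elements of `L` sum to `0` (as `L = -L`) and `p = 0` in `F`, so every coset of `L`
has sum `0` and square sum `σ`. A union `S` of `j` cosets therefore has `j * p` elements, sum `0`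
and square sum `j * σ` (`cosetUnion_sum`, `cosetUnion_sum_sq`). Replacing two elements `a, b` of
`S` by `a + t, b - t` outside `S` keeps the size and the sum, and adds `2 * t * (a - b + t)` to the
square sum (`exists_exchange`). It remains to choose `L`, `a`, `b`, `t`.

* For `p ≥ 5` one has `σ = 0`, because `x ↦ 2 * x` permutes `L` and hence `4 * σ = σ`.
  Put `w = ζ / 2`. Some `t ≠ 0` has `w / t ^ 2` outside the prime field. Take `c = w / t - t`, let
  `L` be generated by `c`, and take `a = c`, `b = 0`: the change is `2 * t * (c + t) = ζ`, and
  `t ∉ L`. This needs the two cosets of `t` and `-t` to stay unused, so it works for `m ≤ q - 2 * p`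
  (`exists_of_five_le`). The remaining value `m = q - p` follows from `m = p` by taking complements,
  as the sums of all elements and of all squares of `F` vanish.
* For `p = 3` the hypotheses give `6 ≤ m ≤ q - 6` and `q ≥ 27`. Let `L` be the prime field and
  `w = (ζ - j * σ) / 2`. If `w = 0` no swap is needed. Otherwise take `a = w / t - t` and `b = 0`;
  the cosets of `0`, `a`, `a + t = w / t` and `b - t = -t` behave as needed unless `t` is a root of
  a certain polynomial of degree `13` (`exists_good_shift`).
-/

open Finset

/-- The union of the cosets of `L` belonging to `T`. -/
noncomputable def cosetUnion {F : Type*} [Field F] [Fintype F] (L : AddSubgroup F)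
    (T : Finset (F ⧸ L)) : Finset F := by
  classical exact univ.filter (fun x => (x : F ⧸ L) ∈ T)

lemma mem_cosetUnion {F : Type*} [Field F] [Fintype F] (L : AddSubgroup F)
    (T : Finset (F ⧸ L)) (x : F) : x ∈ cosetUnion L T ↔ (x : F ⧸ L) ∈ T := by
  classical
  simp [cosetUnion]

lemma sum_fiber {F M : Type*} [Field F] [Fintype F] [AddCommMonoid M] (L : AddSubgroup F)
    [Fintype L] [DecidableEq (F ⧸ L)] (g : F) (f : F → M) :
    ∑ x ∈ univ.filter (fun x : F => (x : F ⧸ L) = (g : F ⧸ L)), f x = ∑ l : L, f (g + l) := by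
  symm
  refine Finset.sum_bij (fun l _ => g + l) ?_ ?_ ?_ ?_
  · intro l _
    simp
  · intro a _ b _ h
    exact Subtype.ext (add_left_cancel h)
  · intro x hx
    rw [mem_filter] at hx
    have h := QuotientAddGroup.eq.1 hx.2.symm
    exact ⟨⟨-g + x, h⟩, mem_univ _, by simp⟩
  · intros; rfl

/-- If the sum of `f` over a coset of `L` is always `s`, its sum over `|T|` cosets is `|T| • s`. -/
lemma cosetUnion_sum_const {F M : Type*} [Field F] [Fintype F] [AddCommMonoid M]
    (L : AddSubgroup F) [Fintype L] (T : Finset (F ⧸ L)) (f : F → M) (s : M)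
    (h : ∀ g : F, ∑ l : L, f (g + l) = s) :
    ∑ x ∈ cosetUnion L T, f x = T.card • s := by
  classical
  rw [← Finset.sum_fiberwise_of_maps_to (s := cosetUnion L T) (t := T)
    (g := fun x : F => (x : F ⧸ L)) (fun x hx => (mem_cosetUnion L T x).1 hx)]
  rw [← Finset.sum_const]
  refine Finset.sum_congr rfl fun a ha => ?_
  obtain ⟨g, rfl⟩ := QuotientAddGroup.mk_surjective a
  rw [← h g, ← sum_fiber]
  refine Finset.sum_congr ?_ fun _ _ => rfl
  ext x
  simp only [mem_filter, mem_cosetUnion, mem_univ, true_and, and_iff_right_iff_imp]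
  intro hx
  rw [hx]; exact ha

lemma cosetUnion_card {F : Type*} [Field F] [Fintype F] (L : AddSubgroup F)
    [Fintype L] (T : Finset (F ⧸ L)) :
    (cosetUnion L T).card = T.card * Fintype.card L := by
  rw [Finset.card_eq_sum_ones, cosetUnion_sum_const L T (fun _ => 1) (Fintype.card L)]
  · simp
  · simp

lemma subgroup_sum_eq_zero {F : Type*} [Field F] (L : AddSubgroup F) [Fintype L]
    (h2 : (2 : F) ≠ 0) : ∑ l : L, (l : F) = 0 := by
  have h : ∑ l : L, (l : F) = ∑ l : L, ((-l : L) : F) :=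
    (Equiv.sum_comp (Equiv.neg L) (fun l : L => (l : F))).symm
  simp only [AddSubgroup.coe_neg, Finset.sum_neg_distrib] at h
  have : (2 : F) * ∑ l : L, (l : F) = 0 := by linear_combination h
  exact (mul_eq_zero.1 this).resolve_left h2

/-- Doubling permutes a subgroup of odd characteristic, so its square sum `σ` has `4 * σ = σ`. -/
lemma subgroup_sum_sq_eq_zero {F : Type*} [Field F] (L : AddSubgroup F) [Fintype L]
    (h2 : (2 : F) ≠ 0) (h3 : (3 : F) ≠ 0) : ∑ l : L, (l : F) ^ 2 = 0 := by
  have hb : Function.Bijective (fun l : L => l + l) := by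
    rw [← Finite.injective_iff_bijective]
    intro a b hab
    have h : (a : F) + a = b + b := congrArg Subtype.val hab
    apply Subtype.ext
    apply mul_left_cancel₀ h2
    linear_combination h
  have h : ∑ l : L, (l : F) ^ 2 = ∑ l : L, ((l + l : L) : F) ^ 2 :=
    (hb.sum_comp (fun l : L => (l : F) ^ 2)).symm
  have h' : ∑ l : L, ((l + l : L) : F) ^ 2 = 4 * ∑ l : L, (l : F) ^ 2 := by
    rw [Finset.mul_sum]
    refine Finset.sum_congr rfl fun l _ => ?_
    rw [AddSubgroup.coe_add]; ring
  have : (3 : F) * ∑ l : L, (l : F) ^ 2 = 0 := by linear_combination -h - h'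
  exact (mul_eq_zero.1 this).resolve_left h3

lemma cosetUnion_sum {F : Type*} [Field F] [Fintype F] (L : AddSubgroup F)
    [Fintype L] (h2 : (2 : F) ≠ 0) (hL : (Fintype.card L : F) = 0) (T : Finset (F ⧸ L)) :
    ∑ x ∈ cosetUnion L T, x = 0 := by
  rw [cosetUnion_sum_const L T (fun x => x) 0]
  · simp
  · intro g
    rw [Finset.sum_add_distrib, subgroup_sum_eq_zero L h2]
    simp [hL]

lemma cosetUnion_sum_sq {F : Type*} [Field F] [Fintype F] (L : AddSubgroup F)
    [Fintype L] (h2 : (2 : F) ≠ 0) (hL : (Fintype.card L : F) = 0) (T : Finset (F ⧸ L)) :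
    ∑ x ∈ cosetUnion L T, x ^ 2 = T.card * ∑ l : L, (l : F) ^ 2 := by
  rw [cosetUnion_sum_const L T (fun x => x ^ 2) (∑ l : L, (l : F) ^ 2), nsmul_eq_mul]
  intro g
  have : ∀ l : L, (g + (l : F)) ^ 2 = g ^ 2 + 2 * g * l + (l : F) ^ 2 := fun l => by ring
  simp only [this, Finset.sum_add_distrib, ← Finset.mul_sum, subgroup_sum_eq_zero L h2]
  simp [hL]

/-- There is an `m`-subset of `F` with sum `0` and square sum `ζ`. -/
def HasSumSubset (F : Type*) [Field F] (m : ℕ) (ζ : F) : Prop :=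
  ∃ S : Finset F, S.card = m ∧ ∑ x ∈ S, x = 0 ∧ ∑ x ∈ S, x ^ 2 = ζ

/-- Replacing `a, b ∈ S` by `a + t, b - t ∉ S` changes the square sum by `2 * t * (a - b + t)`. -/
lemma exists_exchange {F : Type*} [Field F] (S : Finset F) (a b t : F)
    (ha : a ∈ S) (hb : b ∈ S) (hab : a ≠ b) (hat : a + t ∉ S) (hbt : b - t ∉ S)
    (hne : a + t ≠ b - t) (hS : ∑ x ∈ S, x = 0) :
    HasSumSubset F S.card (∑ x ∈ S, x ^ 2 + 2 * t * (a - b + t)) := by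
  classical
  obtain ⟨R, hbR, rfl⟩ : ∃ R, b ∉ R ∧ S = insert b R :=
    ⟨S.erase b, by simp, (Finset.insert_erase hb).symm⟩
  obtain ⟨R', haR, rfl⟩ : ∃ R', a ∉ R' ∧ R = insert a R' :=
    ⟨R.erase a, by simp,
      (Finset.insert_erase ((Finset.mem_insert.1 ha).resolve_left hab)).symm⟩
  have h1 : b - t ∉ R' := fun h => hbt (by simp [h])
  have h2 : a + t ∉ insert (b - t) R' := by
    intro h
    rcases Finset.mem_insert.1 h with h | h
    · exact hne h
    · exact hat (by simp [h])
  refine ⟨insert (a + t) (insert (b - t) R'), ?_, ?_, ?_⟩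
  · rw [card_insert_of_notMem h2, card_insert_of_notMem h1, card_insert_of_notMem hbR,
      card_insert_of_notMem haR]
  · rw [sum_insert h2, sum_insert h1]
    rw [sum_insert hbR, sum_insert haR] at hS
    linear_combination hS
  · rw [sum_insert h2, sum_insert h1, sum_insert hbR, sum_insert haR]
    ring

/-- The swap applied to a union of `j` cosets that contains the cosets of `a` and `b` but not those
of `a + t` and `b - t`. The number of cosets is `n`. -/
lemma exists_coset_swap {F : Type*} [Field F] [Fintype F] (L : AddSubgroup F)
    [Fintype L] (h2 : (2 : F) ≠ 0) (hL : (Fintype.card L : F) = 0) (n j : ℕ)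
    (hn : Fintype.card F = n * Fintype.card L) (a b t : F)
    (T₀ : Finset (F ⧸ L)) (haT : (a : F ⧸ L) ∈ T₀) (hbT : (b : F ⧸ L) ∈ T₀)
    (hj : T₀.card ≤ j) (hjn : j + 2 ≤ n)
    (hat : ((a + t : F) : F ⧸ L) ∉ T₀) (hbt : ((b - t : F) : F ⧸ L) ∉ T₀)
    (hab : a ≠ b) (hne : a + t ≠ b - t) :
    HasSumSubset F (j * Fintype.card L)
      (j * ∑ l : L, (l : F) ^ 2 + 2 * t * (a - b + t)) := by
  classical
  have hQ : Fintype.card (F ⧸ L) = n := by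
    have h := AddSubgroup.card_eq_card_quotient_mul_card_addSubgroup L
    simp only [Nat.card_eq_fintype_card] at h
    rw [hn] at h
    exact (Nat.eq_of_mul_eq_mul_right Fintype.card_pos h).symm
  set B : Finset (F ⧸ L) := {((a + t : F) : F ⧸ L), ((b - t : F) : F ⧸ L)} with hB
  have hsub : T₀ ⊆ univ \ B := by
    intro x hx
    simp only [hB, mem_sdiff, mem_univ, true_and, mem_insert, mem_singleton, not_or]
    exact ⟨fun h => hat (h ▸ hx), fun h => hbt (h ▸ hx)⟩
  have hcard : j ≤ (univ \ B).card := by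
    have h1 : (univ \ B).card = n - B.card := by
      rw [Finset.card_sdiff_of_subset (subset_univ _), Finset.card_univ, hQ]
    have h2 : B.card ≤ 2 := Finset.card_le_two
    omega
  obtain ⟨T, hT0, hTB, hTj⟩ := Finset.exists_subsuperset_card_eq hsub hj hcard
  have hout : ∀ x : F, (x : F ⧸ L) ∈ B → x ∉ cosetUnion L T := fun x hx h =>
    (mem_sdiff.1 (hTB ((mem_cosetUnion L T x).1 h))).2 hx
  have := exists_exchange (cosetUnion L T) a b t ((mem_cosetUnion L T a).2 (hT0 haT))
    ((mem_cosetUnion L T b).2 (hT0 hbT)) hab (hout _ (by simp [hB])) (hout _ (by simp [hB]))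
    hne (cosetUnion_sum L h2 hL T)
  rwa [cosetUnion_card, cosetUnion_sum_sq L h2 hL, hTj] at this

lemma exists_not_mem_subfield {F : Type*} [Field F] (K : Subfield F) (hK : K ≠ ⊤)
    (h2 : (2 : F) ≠ 0) (w : F) (hw : w ≠ 0) : ∃ t : F, t ≠ 0 ∧ w / t ^ 2 ∉ K := by
  by_contra! h
  apply hK
  -- all squares lie in `K`, and every element is a combination of squares
  have hwK : w ∈ K := by simpa using h 1 one_ne_zero
  have hsq : ∀ t : F, t ^ 2 ∈ K := by
    intro t
    by_cases ht : t = 0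
    · simp [ht]
    · have h1 := K.div_mem hwK (h t ht)
      rwa [div_div_cancel₀ hw] at h1
  rw [eq_top_iff]
  intro t _
  have h1 : ((t + 1) ^ 2 - t ^ 2 - 1) / 2 ∈ K :=
    K.div_mem (K.sub_mem (K.sub_mem (hsq _) (hsq _)) K.one_mem) (ofNat_mem K 2)
  have h3 : ((t + 1) ^ 2 - t ^ 2 - 1) / 2 = t := by field_simp; ring
  rwa [h3] at h1

lemma card_zmultiples_prime {F : Type*} [Field F] (p : ℕ) [Fact p.Prime]
    [CharP F p] (c : F) (hc : c ≠ 0) [Fintype (AddSubgroup.zmultiples c)] :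
    Fintype.card (AddSubgroup.zmultiples c) = p := by
  rw [← Nat.card_eq_fintype_card, Nat.card_zmultiples]
  apply addOrderOf_eq_prime _ hc
  simp

lemma exists_of_five_le {F : Type*} [Field F] [Fintype F]
    (p : ℕ) [Fact p.Prime] [CharP F p] (h2 : (2 : F) ≠ 0) (h3 : (3 : F) ≠ 0) (n j : ℕ)
    (hn : Fintype.card F = n * p) (hj : 1 ≤ j) (hjn : j + 2 ≤ n) (ζ : F) (hζ : ζ ≠ 0) :
    HasSumSubset F (j * p) ζ := by
  classical
  have hp : p.Prime := Fact.out
  let K : Subfield F := (ZMod.castHom (dvd_refl p) F).fieldRange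
  have hK : K ≠ ⊤ := by
    intro h
    have hs : Function.Surjective (ZMod.castHom (dvd_refl p) F) :=
      RingHom.fieldRange_eq_top_iff.1 h
    have := Fintype.card_le_of_surjective _ hs
    rw [ZMod.card, hn] at this
    have := hp.pos
    nlinarith
  obtain ⟨t, ht, htK⟩ := exists_not_mem_subfield K hK h2 (ζ / 2) (div_ne_zero hζ h2)
  obtain ⟨c, hc⟩ : ∃ c, c = ζ / 2 / t - t := ⟨_, rfl⟩
  have hct : t * (c + t) = ζ / 2 := by rw [hc]; field_simp; ring
  have hc0 : c ≠ 0 := by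
    rintro rfl
    apply htK
    rw [← hct]
    have : t * (0 + t) / t ^ 2 = 1 := by field_simp; simp
    rw [this]; exact K.one_mem
  have htL : t ∉ AddSubgroup.zmultiples c := by
    intro h
    obtain ⟨z, hz⟩ := AddSubgroup.mem_zmultiples_iff.1 h
    rw [zsmul_eq_mul] at hz
    have hz0 : (z : F) ≠ 0 := by
      intro h0; rw [h0, zero_mul] at hz; exact ht hz.symm
    apply htK
    have : ζ / 2 / t ^ 2 = (1 + z) / z := by
      rw [← hct, div_eq_div_iff (pow_ne_zero 2 ht) hz0]
      linear_combination t * hz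
    rw [this]
    exact K.div_mem (K.add_mem K.one_mem (intCast_mem K z)) (intCast_mem K z)
  have hcL : c ∈ AddSubgroup.zmultiples c := AddSubgroup.mem_zmultiples c
  have hcard := card_zmultiples_prime p c hc0
  have key := exists_coset_swap (AddSubgroup.zmultiples c) h2 (by rw [hcard]; simp) n j
    (by rw [hcard, hn]) c 0 t {((0 : F) : F ⧸ AddSubgroup.zmultiples c)}
    (by simp) (by simp) (by simpa using hj) hjn ?_ ?_ hc0 ?_
  · rw [subgroup_sum_sq_eq_zero _ h2 h3, hcard] at key
    convert key using 1
    have : ζ = 2 * (ζ / 2) := by field_simp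
    rw [this, ← hct]; ring
  · rw [mem_singleton, QuotientAddGroup.mk_zero, QuotientAddGroup.eq_zero_iff,
      AddSubgroup.add_mem_cancel_left _ hcL]
    exact htL
  · rw [mem_singleton, QuotientAddGroup.mk_zero, QuotientAddGroup.eq_zero_iff, zero_sub,
      neg_mem_iff]
    exact htL
  · intro h
    -- `c = -2 * t` would give `w / t ^ 2 = -1`
    apply htK
    have : ζ / 2 / t ^ 2 = -1 := by
      rw [← hct, div_eq_iff (pow_ne_zero 2 ht)]
      linear_combination t * h
    rw [this]
    exact K.neg_mem K.one_mem

/-- The values of `t` to be avoided for `p = 3`, when `L = {0, 1, -1}`, are roots of a polynomial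
of degree `13`. -/
lemma exists_good_shift {F : Type*} [Field F] [Fintype F] (hq : 13 < Fintype.card F) (w : F) :
    ∃ t : F, t ≠ 0 ∧ t ≠ 1 ∧ t ≠ -1 ∧ t ≠ w ∧ t ≠ -w ∧ w ≠ t * t ∧ w - t * t ≠ t ∧
      w - t * t ≠ -t ∧ w + t * t ≠ 0 := by
  classical
  open Polynomial in
  let P : F[X] := X * (X - C 1) * (X + C 1) * (X - C w) * (X + C w) * (X ^ 2 - C w) *
    (X ^ 2 + X - C w) * (X ^ 2 - X - C w) * (X ^ 2 + C w)
  have hdeg : P.natDegree = 13 := by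
    unfold P; compute_degree!
  have hP : P ≠ 0 := by
    intro h; rw [h] at hdeg; simp at hdeg
  obtain ⟨t, ht⟩ : ∃ t, P.eval t ≠ 0 := by
    by_contra! h
    exact hP (Polynomial.eq_zero_of_natDegree_lt_card_of_eval_eq_zero P
      Function.injective_id (by simpa using h) (by rw [hdeg]; exact hq))
  simp only [P, Polynomial.eval_mul, Polynomial.eval_add, Polynomial.eval_sub,
    Polynomial.eval_X, Polynomial.eval_C, Polynomial.eval_pow, mul_ne_zero_iff] at ht
  obtain ⟨⟨⟨⟨⟨⟨⟨⟨h1, h2⟩, h3⟩, h4⟩, h5⟩, h6⟩, h7⟩, h8⟩, h9⟩ := ht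
  refine ⟨t, h1, fun h => h2 ?_, fun h => h3 ?_, fun h => h4 ?_, fun h => h5 ?_,
    fun h => h6 ?_, fun h => h7 ?_, fun h => h8 ?_, fun h => h9 ?_⟩
  · linear_combination h
  · linear_combination h
  · linear_combination h
  · linear_combination h
  · linear_combination -h
  · linear_combination -h
  · linear_combination -h
  · linear_combination h

lemma mem_zmultiples_one_three {F : Type*} [Field F] [CharP F 3] (x : F)
    (hx : x ∈ AddSubgroup.zmultiples (1 : F)) : x = 0 ∨ x = 1 ∨ x = -1 := by
  obtain ⟨z, rfl⟩ := AddSubgroup.mem_zmultiples_iff.1 hx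
  rw [zsmul_eq_mul, mul_one]
  have h3 : (3 : F) = 0 := by exact_mod_cast CharP.cast_eq_zero F 3
  have hz : (z : F) = ((z % 3 : ℤ) : F) := by
    conv_lhs => rw [← Int.emod_add_mul_ediv z 3]
    push_cast
    rw [h3]; ring
  have : z % 3 = 0 ∨ z % 3 = 1 ∨ z % 3 = 2 := by omega
  rcases this with h | h | h <;> rw [hz, h]
  · simp
  · simp
  · right; right; push_cast; linear_combination h3

lemma exists_of_three {F : Type*} [Field F] [Fintype F] [CharP F 3] (h2 : (2 : F) ≠ 0) (n j : ℕ)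
    (hn : Fintype.card F = n * 3) (hq : 13 < Fintype.card F) (hj : 2 ≤ j) (hjn : j + 2 ≤ n)
    (ζ : F) : HasSumSubset F (j * 3) ζ := by
  classical
  have : Fact (Nat.Prime 3) := ⟨Nat.prime_three⟩
  obtain ⟨L, hLdef⟩ : ∃ L, L = AddSubgroup.zmultiples (1 : F) := ⟨_, rfl⟩
  have hmem : ∀ x ∈ L, x = 0 ∨ x = 1 ∨ x = -1 := by
    intro x hx; rw [hLdef] at hx; exact mem_zmultiples_one_three x hx
  have hcard : Fintype.card L = 3 := by
    subst hLdef; exact card_zmultiples_prime 3 (1 : F) one_ne_zero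
  have hL0 : (Fintype.card L : F) = 0 := by
    rw [hcard]; exact CharP.cast_eq_zero F 3
  obtain ⟨w, hw⟩ : ∃ w, w = (ζ - j * ∑ l : L, (l : F) ^ 2) / 2 := ⟨_, rfl⟩
  have hw' : ζ = j * ∑ l : L, (l : F) ^ 2 + 2 * w := by rw [hw]; field_simp; ring
  by_cases hw0 : w = 0
  · have hQ : Fintype.card (F ⧸ L) = n := by
      have h := AddSubgroup.card_eq_card_quotient_mul_card_addSubgroup L
      simp only [Nat.card_eq_fintype_card] at h
      rw [hn, hcard] at h
      omega
    obtain ⟨T, -, hT⟩ := Finset.exists_subset_card_eq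
      (s := (univ : Finset (F ⧸ L))) (n := j) (by rw [card_univ, hQ]; omega)
    refine ⟨cosetUnion L T, ?_, cosetUnion_sum L h2 hL0 T, ?_⟩
    · rw [cosetUnion_card, hT, hcard]
    · rw [cosetUnion_sum_sq L h2 hL0, hT, hw', hw0]; ring
  obtain ⟨t, t1, t2, t3, t4, t5, t6, t7, t8, t9⟩ := exists_good_shift hq w
  have htL : t ∉ L := fun h => by
    rcases hmem t h with h | h | h <;> contradiction
  have hwL : w / t ∉ L := fun h => by
    rcases hmem _ h with h | h | h
    · exact div_ne_zero hw0 t1 h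
    · rw [div_eq_iff t1] at h; exact t4 (by linear_combination -h)
    · rw [div_eq_iff t1] at h; exact t5 (by linear_combination h)
  have heL : w / t - t ∉ L := fun h => by
    have hm : (w / t - t) * t = w - t * t := by field_simp
    rcases hmem _ h with h | h | h <;> rw [h] at hm
    · exact t6 (by linear_combination -hm)
    · exact t7 (by linear_combination -hm)
    · exact t8 (by linear_combination -hm)
  have key := exists_coset_swap L h2 hL0 n j (by rw [hcard, hn]) (w / t - t) 0 t
    {((w / t - t : F) : F ⧸ L), ((0 : F) : F ⧸ L)}
    (by simp) (by simp) (card_le_two.trans hj) hjn ?_ ?_ ?_ ?_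
  · rw [hcard] at key
    convert key using 1
    rw [hw']
    field_simp
    ring
  · rw [mem_insert, mem_singleton, QuotientAddGroup.eq, QuotientAddGroup.eq]
    rintro (h | h)
    · apply htL
      rw [← neg_mem_iff]
      convert h using 1; ring
    · apply hwL
      rw [← neg_mem_iff]
      convert h using 1; ring
  · rw [mem_insert, mem_singleton, QuotientAddGroup.eq, QuotientAddGroup.eq]
    rintro (h | h)
    · apply hwL
      convert h using 1; ring
    · apply htL
      convert h using 1; ring
  · intro h
    exact heL (h ▸ L.zero_mem)
  · intro h
    apply t9
    have hm : w = w / t * t := by field_simp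
    rw [hm]
    linear_combination t * h

/-- Complements: the sums of all elements of `F` and of all their squares are `0`. -/
lemma HasSumSubset.compl {F : Type*} [Field F] [Fintype F] (hq : 3 < Fintype.card F) {m : ℕ} {ζ : F}
    (h : HasSumSubset F m ζ) : HasSumSubset F (Fintype.card F - m) (-ζ) := by
  classical
  obtain ⟨S, hc, h1, h2⟩ := h
  refine ⟨Sᶜ, by rw [card_compl, hc], ?_, ?_⟩
  · have e := Finset.sum_add_sum_compl S (fun x : F => x)
    have z := FiniteField.sum_pow_lt_card_sub_one F 1 (by omega)
    simp only [pow_one] at z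
    rw [z, h1, zero_add] at e
    exact e
  · have e := Finset.sum_add_sum_compl S (fun x : F => x ^ 2)
    rw [FiniteField.sum_pow_lt_card_sub_one F 2 (by omega), h2] at e
    linear_combination e

lemma HasSumSubset.exists_fun {F : Type*} [Field F] {m : ℕ} {ζ : F} (h : HasSumSubset F m ζ) :
    ∃ y : Fin m → F, Function.Injective y ∧ (∑ i, y i) = 0 ∧ (∑ i, (y i) ^ 2) = ζ := by
  obtain ⟨S, rfl, h1, h2⟩ := h
  refine ⟨fun i => (S.equivFin.symm i : F),
    Subtype.val_injective.comp S.equivFin.symm.injective, ?_, ?_⟩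
  · rw [Equiv.sum_comp S.equivFin.symm (fun x : S => (x : F)), Finset.sum_coe_sort S (fun x => x),
      h1]
  · rw [Equiv.sum_comp S.equivFin.symm (fun x : S => (x : F) ^ 2),
      Finset.sum_coe_sort S (fun x => x ^ 2), h2]

/-- let `F_q` have odd characteristic `p`, and let `k` satisfy
`3 < k + 2 < q - 3` and `p ∣ k + 2`. Then for every `ζ ∈ F_q^*` there exist
`k + 2` distinct elements `y_1, …, y_{k+2}` of `F_q` with
`y_1 + ⋯ + y_{k+2} = 0` and `y_1² + ⋯ + y_{k+2}² = ζ`. -/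
theorem stmt_19 {F : Type*} [Field F] [Fintype F]
    (p : ℕ) [Fact p.Prime] [CharP F p] (hp : p ≠ 2)
    (k : ℕ) (hk3 : 3 < k + 2) (hkq : k + 2 < Fintype.card F - 3)
    (hpk : p ∣ k + 2) :
    ∀ ζ : F, ζ ≠ 0 →
      ∃ y : Fin (k + 2) → F, Function.Injective y ∧
        (∑ i, y i) = 0 ∧ (∑ i, (y i) ^ 2) = ζ := by
  intro ζ hζ
  apply HasSumSubset.exists_fun
  have hpp : p.Prime := Fact.out
  have hp2 := hpp.two_le
  obtain ⟨j, hj⟩ := hpk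
  rw [mul_comm] at hj
  obtain ⟨r, -, hr⟩ := FiniteField.card F p
  have h2 : (2 : F) ≠ 0 := by
    intro h
    have h' : ((2 : ℕ) : F) = 0 := by exact_mod_cast h
    rw [CharP.cast_eq_zero_iff F p] at h'
    exact hp ((Nat.prime_dvd_prime_iff_eq hpp Nat.prime_two).1 h')
  have hr1 : 1 ≤ (r : ℕ) := r.pos
  obtain ⟨s, hs⟩ : ∃ s, (r : ℕ) = s + 1 := ⟨r - 1, by omega⟩
  have hn : Fintype.card F = p ^ s * p := by rw [hr, hs, pow_succ]
  have hj1 : 1 ≤ j := by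
    rcases Nat.eq_zero_or_pos j with h | h
    · subst h; omega
    · exact h
  have hjs : j < p ^ s := by
    by_contra! h
    have := Nat.mul_le_mul_right p h
    omega
  have hs0 : s ≠ 0 := by
    rintro rfl
    simp only [pow_zero] at hjs
    omega
  have hps : p ≤ p ^ s := Nat.le_self_pow hs0 p
  rw [hj]
  by_cases hp3 : p = 3
  · subst hp3
    -- `j * 3 < 3 ^ (s + 1) - 3` rules out `q = 9`
    exact exists_of_three h2 (3 ^ s) j hn (by
      rcases Nat.lt_or_ge s 2 with h | h
      · obtain rfl : s = 1 := by omega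
        omega
      · have := Nat.pow_le_pow_right (n := 3) (by norm_num) h
        omega) (by omega) (by omega) ζ
  have hp5 : 5 ≤ p := by
    have : p ≠ 4 := by rintro rfl; exact absurd hpp (by norm_num)
    omega
  have h3 : (3 : F) ≠ 0 := by
    intro h
    have h' : ((3 : ℕ) : F) = 0 := by exact_mod_cast h
    rw [CharP.cast_eq_zero_iff F p] at h'
    exact hp3 ((Nat.prime_dvd_prime_iff_eq hpp Nat.prime_three).1 h')
  by_cases hjn : j + 2 ≤ p ^ s
  · exact exists_of_five_le p h2 h3 (p ^ s) j hn hj1 hjn ζ hζ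
  · have h := (exists_of_five_le p h2 h3 (p ^ s) 1 hn le_rfl (by omega) (-ζ)
      (neg_ne_zero.2 hζ)).compl (by omega)
    have e : Fintype.card F - 1 * p = j * p := by
      rw [hn, ← Nat.sub_mul]
      congr 1; omega
    rwa [e, neg_neg] at h
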